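/- Let N = M ≥ 2 and consider the softmax reward with inner temperature t and outer temperature τ. If t > 0 and τ ≤ 0, then the heterogeneity gain satisfies ΔR(t,τ;N) ≥ σ(t,N) − 1/N, where σ(t,N) = e^t/(e^t + N − 1). -/

import Mathlib

open Finset

/-- An N×M allocation matrix is admissible if all entries are nonnegative and
every agent's (row's) efforts sum to 1. -/
def Admissible {N M : ℕ} (A : Fin N → Fin M → ℝ) : Prop :=
  (∀ i j, 0 ≤ A i j) ∧ ∀ i, ∑ j, A i j = 1

/-- An allocation is homogeneous if all rows coincide. -/
def Homogeneous {N M : ℕ} (A : Fin N → Fin M → ℝ) : Prop :=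
  ∀ i i' : Fin N, A i = A i'

/-- The column of task `j`. -/
def col {N M : ℕ} (A : Fin N → Fin M → ℝ) (j : Fin M) : Fin N → ℝ :=
  fun i => A i j

/-- Softmax inner aggregator with temperature `t`: the task score
`T_j(A) = Σ_i (e^{t·r_{ij}} / Σ_ℓ e^{t·r_{ℓj}}) · r_{ij}` applied to a column. -/
noncomputable def innerScore (t : ℝ) {N : ℕ} (a : Fin N → ℝ) : ℝ :=
  ∑ i, Real.exp (t * a i) / (∑ l, Real.exp (t * a l)) * a i

/-- Softmax team reward with inner temperature `t` and outer temperature `τ`: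
`R(A) = Σ_j (e^{τ·T_j} / Σ_ℓ e^{τ·T_ℓ}) · T_j`. -/
noncomputable def softReward (t τ : ℝ) {N : ℕ} (A : Fin N → Fin N → ℝ) : ℝ :=
  ∑ j, Real.exp (τ * innerScore t (col A j)) /
      (∑ l, Real.exp (τ * innerScore t (col A l))) * innerScore t (col A j)

/-- `σ(t,N) = e^t / (e^t + N − 1)`. -/
noncomputable def sigma' (t : ℝ) (N : ℕ) : ℝ :=
  Real.exp t / (Real.exp t + N - 1)

/-- Heterogeneity gain `ΔR(t,τ;N) = R_het − R_hom` for the softmax reward. -/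
noncomputable def hetGain (t τ : ℝ) (N : ℕ) : ℝ :=
  sSup {r : ℝ | ∃ A : Fin N → Fin N → ℝ, Admissible A ∧ softReward t τ A = r} -
    sSup {r : ℝ | ∃ A : Fin N → Fin N → ℝ,
      Admissible A ∧ Homogeneous A ∧ softReward t τ A = r}

theorem sum_exp_pos (t : ℝ) {N : ℕ} (hN : 0 < N) (a : Fin N → ℝ) :
    0 < ∑ l, Real.exp (t * a l) :=
  Finset.sum_pos (fun _ _ => Real.exp_pos _) ⟨⟨0, hN⟩, Finset.mem_univ _⟩

theorem innerScore_eq_div (t : ℝ) {N : ℕ} (a : Fin N → ℝ) :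
    innerScore t a = (∑ i, Real.exp (t * a i) * a i) / ∑ l, Real.exp (t * a l) := by
  rw [innerScore, Finset.sum_div]
  exact Finset.sum_congr rfl fun i _ => div_mul_eq_mul_div _ _ _

/-- The team reward is the softmax average of the task scores. -/
theorem softReward_eq_innerScore (t τ : ℝ) {N : ℕ} (A : Fin N → Fin N → ℝ) :
    softReward t τ A = innerScore τ (fun j => innerScore t (col A j)) := rfl

theorem innerScore_le (t : ℝ) {N : ℕ} (hN : 0 < N) {a : Fin N → ℝ} {B : ℝ}
    (h : ∀ i, a i ≤ B) : innerScore t a ≤ B := by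
  rw [innerScore_eq_div, div_le_iff₀ (sum_exp_pos t hN a), Finset.mul_sum]
  refine Finset.sum_le_sum fun i _ => ?_
  rw [mul_comm B]
  exact mul_le_mul_of_nonneg_left (h i) (Real.exp_pos _).le

theorem innerScore_const (t : ℝ) {N : ℕ} (hN : 0 < N) (c : ℝ) :
    innerScore t (fun _ : Fin N => c) = c := by
  rw [innerScore_eq_div, ← Finset.sum_mul, mul_div_assoc, mul_comm,
    div_mul_cancel₀ _ (sum_exp_pos t hN _).ne']

/-- At a nonpositive temperature the softmax average is at most the arithmetic mean. -/
theorem innerScore_le_mean {τ : ℝ} (hτ : τ ≤ 0) {N : ℕ} (hN : 0 < N) (c : Fin N → ℝ) :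
    innerScore τ c ≤ (∑ j, c j) / N := by
  have hanti : Antivary (fun j => Real.exp (τ * c j)) c := fun i j hij =>
    Real.exp_le_exp.mpr (mul_le_mul_of_nonpos_left hij.le hτ)
  have hcheb := hanti.card_mul_sum_le_sum_mul_sum
  rw [Fintype.card_fin] at hcheb
  rw [innerScore_eq_div, div_le_div_iff₀ (sum_exp_pos τ hN c) (by exact_mod_cast hN)]
  linarith

/-- The score of a task served by exactly one fully committed agent. -/
theorem innerScore_single (t : ℝ) {N : ℕ} (j : Fin N) :
    innerScore t (fun i => if i = j then 1 else 0) = sigma' t N := by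
  have hsum : ∑ l : Fin N, Real.exp (t * if l = j then 1 else 0) = Real.exp t + N - 1 := by
    have h : ∀ l : Fin N, Real.exp (t * if l = j then 1 else 0)
        = (if l = j then Real.exp t - 1 else 0) + 1 := fun l => by
      split_ifs <;> simp
    simp only [h, Finset.sum_add_distrib, Finset.sum_ite_eq', Finset.mem_univ, if_true,
      Finset.sum_const, Finset.card_univ, Fintype.card_fin, nsmul_eq_mul, mul_one]
    ring
  rw [innerScore_eq_div, hsum, sigma']
  simp

theorem Admissible.le_one {N M : ℕ} {A : Fin N → Fin M → ℝ} (hA : Admissible A)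
    (i : Fin N) (j : Fin M) : A i j ≤ 1 :=
  hA.2 i ▸ Finset.single_le_sum (fun k _ => hA.1 i k) (Finset.mem_univ j)

theorem Admissible.softReward_le_one (t τ : ℝ) {N : ℕ} (hN : 0 < N)
    {A : Fin N → Fin N → ℝ} (hA : Admissible A) : softReward t τ A ≤ 1 :=
  innerScore_le τ hN fun j => innerScore_le t hN fun i => hA.le_one i j

theorem Admissible.softReward_le_of_homogeneous (t : ℝ) {τ : ℝ} (hτ : τ ≤ 0) {N : ℕ}
    (hN : 0 < N) {A : Fin N → Fin N → ℝ} (hA : Admissible A) (hH : Homogeneous A) :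
    softReward t τ A ≤ 1 / N := by
  have hT : ∀ j, innerScore t (col A j) = A ⟨0, hN⟩ j := fun j => by
    have hcol : col A j = fun _ => A ⟨0, hN⟩ j := funext fun i => congrFun (hH i ⟨0, hN⟩) j
    rw [hcol, innerScore_const t hN]
  rw [softReward_eq_innerScore, funext hT, ← hA.2 ⟨0, hN⟩]
  exact innerScore_le_mean hτ hN _

theorem admissible_identity (N : ℕ) :
    Admissible (fun i j : Fin N => if i = j then (1 : ℝ) else 0) :=
  ⟨fun i j => by dsimp only; split_ifs <;> norm_num, fun i => by simp⟩

theorem softReward_identity (t τ : ℝ) {N : ℕ} (hN : 0 < N) :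
    softReward t τ (fun i j : Fin N => if i = j then (1 : ℝ) else 0) = sigma' t N :=
  (congrArg (innerScore τ) (funext fun j => innerScore_single t j)).trans
    (innerScore_const τ hN _)

/-- Softmax heterogeneity gain, `t > 0`, `τ ≤ 0` case: for
`N = M ≥ 2`, `ΔR(t,τ;N) ≥ σ(t,N) − 1/N`. -/
theorem stmt4 (N : ℕ) (hN : 2 ≤ N) (t τ : ℝ) (ht : 0 < t) (hτ : τ ≤ 0) :
    sigma' t N - 1 / N ≤ hetGain t τ N := by
  have hpos : 0 < N := by omega
  refine sub_le_sub ?_ ?_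
  · exact le_csSup ⟨1, by rintro _ ⟨A, hA, rfl⟩; exact hA.softReward_le_one t τ hpos⟩
      ⟨_, admissible_identity N, softReward_identity t τ hpos⟩
  · refine Real.sSup_le ?_ (by positivity)
    rintro _ ⟨A, hA, hH, rfl⟩
    exact hA.softReward_le_of_homogeneous t hτ hpos hH
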